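/- Let p ∈ ℝ[x₁,…,xₙ] be real-zero with respect to e ∈ ℝⁿ, with compact rigidly convex set S_e(p), and let a ∈ ∂S_e(p) be such that every irreducible factor pᵢ of p vanishing at a has a as a smooth point. Then, writing I_a = {i : pᵢ(a) = 0}, for all sufficiently small ε > 0 the intersection of S_e(p) with the closed ball B_ε(a) of radius ε around a satisfies B_ε(a) ∩ S_e(p) = {b ∈ ℝⁿ : ‖b − a‖² ≤ ε² and pᵢ(b) ≥ 0 for all i ∈ I_a} (where each pᵢ is normalized so that pᵢ(e) > 0). -/

import Mathlib

open MvPolynomial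

/-- The univariate polynomial `t ↦ h(a + t·v)` obtained by restricting a multivariate
polynomial `h` to the line through `a` with direction `v`. -/
noncomputable def linePoly {n : ℕ} (h : MvPolynomial (Fin n) ℝ) (a v : Fin n → ℝ) :
    Polynomial ℝ :=
  MvPolynomial.aeval (fun i => Polynomial.C (a i) + Polynomial.C (v i) * Polynomial.X) h

/-- A real univariate polynomial has only real roots. -/
def RealRooted (q : Polynomial ℝ) : Prop :=
  ∀ z : ℂ, Polynomial.aeval z q = 0 → z.im = 0

/-- A real univariate polynomial has only non-negative real roots. -/
def NonnegRealRooted (q : Polynomial ℝ) : Prop :=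
  ∀ z : ℂ, Polynomial.aeval z q = 0 → z.im = 0 ∧ 0 ≤ z.re

/-- `h` is hyperbolic in direction `e`: `h(e) ≠ 0` and for all `a` the univariate
polynomial `t ↦ h(a - t·e)` has only real roots. -/
def IsHyperbolic {n : ℕ} (h : MvPolynomial (Fin n) ℝ) (e : Fin n → ℝ) : Prop :=
  MvPolynomial.eval e h ≠ 0 ∧ ∀ a : Fin n → ℝ, RealRooted (linePoly h a (-e))

/-- The hyperbolicity cone `Λ_e(h)`. -/
def hypCone {n : ℕ} (h : MvPolynomial (Fin n) ℝ) (e : Fin n → ℝ) : Set (Fin n → ℝ) :=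
  {a | NonnegRealRooted (linePoly h a (-e))}

/-- multiplicity (order of vanishing) of `h` at `a`: the smallest `m` such that the
degree-`m` homogeneous component of `h(x + a)` is non-zero. -/
noncomputable def multAt {n : ℕ} (h : MvPolynomial (Fin n) ℝ) (a : Fin n → ℝ) : ℕ :=
  sInf {m | MvPolynomial.homogeneousComponent m
    (MvPolynomial.aeval (fun i => MvPolynomial.X i + MvPolynomial.C (a i)) h) ≠ 0}

/-- `p` is a real-zero polynomial with respect to `e`. -/
def IsRealZero {n : ℕ} (p : MvPolynomial (Fin n) ℝ) (e : Fin n → ℝ) : Prop :=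
  MvPolynomial.eval e p ≠ 0 ∧ ∀ v : Fin n → ℝ, RealRooted (linePoly p e v)

/-- The rigidly convex set `S_e(p)` of a real-zero polynomial. -/
def rigidSet {n : ℕ} (p : MvPolynomial (Fin n) ℝ) (e : Fin n → ℝ) : Set (Fin n → ℝ) :=
  {a | ∀ t : ℝ, 0 ≤ t → t < 1 → ¬ (linePoly p e (a - e)).IsRoot t}

/-- A polynomial is strictly quasi-concave at `a` if its Hessian at `a` is negative
definite on the orthogonal complement of its gradient at `a`. -/
def StrictQuasiConcaveAt {n : ℕ} (g : MvPolynomial (Fin n) ℝ) (a : Fin n → ℝ) : Prop :=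
  ∀ v : Fin n → ℝ, v ≠ 0 →
    (∑ i, v i * MvPolynomial.eval a (MvPolynomial.pderiv i g)) = 0 →
    (∑ i, ∑ j, v i * v j *
      MvPolynomial.eval a (MvPolynomial.pderiv i (MvPolynomial.pderiv j g))) < 0

/-- A spectrahedral shadow (cone version): a linear image of
`{a : a₁M₁ + ⋯ + aₘMₘ ⪰ 0}` for real symmetric matrices `Mᵢ`. -/
def IsSpectrahedralShadowCone {n : ℕ} (S : Set (Fin n → ℝ)) : Prop :=
  ∃ (m d : ℕ) (M : Fin m → Matrix (Fin d) (Fin d) ℝ)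
    (L : (Fin m → ℝ) →ₗ[ℝ] (Fin n → ℝ)),
      (∀ i, (M i).IsSymm) ∧ S = L '' {a | (∑ i, a i • M i).PosSemidef}

/-- A spectrahedral shadow: a linear image of
`{b : M₀ + b₁M₁ + ⋯ + bₘMₘ ⪰ 0}` for real symmetric matrices `Mᵢ`. -/
def IsSpectrahedralShadow {n : ℕ} (S : Set (Fin n → ℝ)) : Prop :=
  ∃ (m d : ℕ) (M₀ : Matrix (Fin d) (Fin d) ℝ) (M : Fin m → Matrix (Fin d) (Fin d) ℝ)
    (L : (Fin m → ℝ) →ₗ[ℝ] (Fin n → ℝ)),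
      M₀.IsSymm ∧ (∀ i, (M i).IsSymm) ∧
      S = L '' {b | (M₀ + ∑ i, b i • M i).PosSemidef}

/-- A convex set is pointed if it contains no affine line. -/
def PointedSet {n : ℕ} (S : Set (Fin n → ℝ)) : Prop :=
  ¬ ∃ (a v : Fin n → ℝ), v ≠ 0 ∧ ∀ t : ℝ, a + t • v ∈ S

/-- Directional derivative `∂_e h = Σᵢ eᵢ ∂h/∂xᵢ`. -/
noncomputable def dirDeriv {n : ℕ} (e : Fin n → ℝ) (h : MvPolynomial (Fin n) ℝ) :
    MvPolynomial (Fin n) ℝ :=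
  ∑ i, e i • MvPolynomial.pderiv i h

/-!
A point `b` lies in the rigidly convex set of a product if and only if it lies in those of all
factors, so it suffices to treat one factor `q`, positive at `e` and real-zero. If `q a > 0`, then
`q` stays positive on the segment `[e, b]` for `b` near `a`, by compactness. If `q a = 0`, the key
fact is that a smooth zero is *transversal*: the derivative of `q` at `a` along `a - e` is nonzero,
hence negative, so for `b` near `a` the restriction of `q` to `[e, b]` is strictly decreasing near
`b` and thus positive before `b` as soon as `q b ≥ 0`.

For transversality, tilt the line through `e` and `a` by `s` in a direction `w` transversal to the
zero set of `q`, obtaining real-rooted polynomials `f s`. If `f 0` had a multiple root at `1`, the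
Laguerre expression `(f s)' ^ 2 - f s * (f s)''` at `1` would be `O((f s) ^ 2)` on one side of
`s = 0`. As its quotient by `(f s) ^ 2` is the sum of `1 / (1 - r) ^ 2` over the roots `r` of `f s`,
the roots stay away from `1`, which bounds `|f s 0| = |q e|` by a constant times `|f s 1| → 0`.
-/

section Laguerre

/-- The Laguerre expression `f' ^ 2 - f * f''` of a polynomial; where `f` does not vanish it is
`-f ^ 2` times the second logarithmic derivative of `f`. -/
noncomputable def laguerre {R : Type*} [CommRing R] (f : Polynomial R) : Polynomial R :=
  f.derivative ^ 2 - f * f.derivative.derivative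

theorem laguerre_mul {R : Type*} [CommRing R] (f g : Polynomial R) :
    laguerre (f * g) = f ^ 2 * laguerre g + g ^ 2 * laguerre f := by
  simp only [laguerre, Polynomial.derivative_mul, Polynomial.derivative_add]
  ring

theorem laguerre_X_sub_C_mul {R : Type*} [CommRing R] (r : R) (g : Polynomial R) :
    laguerre ((Polynomial.X - Polynomial.C r) * g) =
      g ^ 2 + (Polynomial.X - Polynomial.C r) ^ 2 * laguerre g := by
  rw [laguerre_mul]
  simp [laguerre, add_comm]

variable {K : Type*} [Field K] [LinearOrder K] [IsStrictOrderedRing K] {f : Polynomial K}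

theorem laguerre_eval_nonneg_of_splits (hf : f.Splits) (x : K) : 0 ≤ (laguerre f).eval x := by
  induction hf using Submonoid.closure_induction with
  | mem g hg =>
    rcases hg with ⟨a, rfl⟩ | ⟨a, rfl⟩ <;> simp [laguerre]
  | one => simp [laguerre]
  | mul g h _ _ hg hh =>
    rw [laguerre_mul]
    simp only [Polynomial.eval_add, Polynomial.eval_mul, Polynomial.eval_pow]
    positivity

theorem sq_eval_le_sq_sub_mul_laguerre_of_isRoot (hf : f.Splits) {r : K} (hr : f.IsRoot r)
    (x : K) : f.eval x ^ 2 ≤ (x - r) ^ 2 * (laguerre f).eval x := by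
  rcases eq_or_ne f 0 with rfl | hf0
  · simp [laguerre]
  obtain ⟨g, rfl⟩ := Polynomial.dvd_iff_isRoot.2 hr
  have hg := laguerre_eval_nonneg_of_splits (hf.of_dvd hf0 (dvd_mul_left g _)) x
  simp only [laguerre_X_sub_C_mul, Polynomial.eval_add, Polynomial.eval_mul, Polynomial.eval_pow,
    Polynomial.eval_sub, Polynomial.eval_X, Polynomial.eval_C]
  rw [mul_add, mul_pow]
  exact le_add_of_nonneg_right (by positivity)

theorem abs_eval_le_mul_of_splits_of_forall_root (hf : f.Splits) {x y B : K}
    (h : ∀ r, f.IsRoot r → |y - r| ≤ B * |x - r|) :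
    |f.eval y| ≤ B ^ f.natDegree * |f.eval x| := by
  have abs_eval (z : K) :
      |f.eval z| = |f.leadingCoeff| * (f.roots.map fun r => |z - r|).prod := by
    rw [hf.eval_eq_prod_roots, abs_mul]
    congr 1
    simpa only [Multiset.map_map] using! map_multiset_prod absHom (f.roots.map fun r => z - r)
  calc |f.eval y|
      ≤ |f.leadingCoeff| * (f.roots.map fun r => B * |x - r|).prod := by
        rw [abs_eval]
        gcongr
        exact Multiset.prod_map_le_prod_map₀ _ _ (fun r _ => abs_nonneg _)
          fun r hr => h r (Polynomial.isRoot_of_mem_roots hr)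
    _ = B ^ f.natDegree * |f.eval x| := by
        rw [abs_eval, Multiset.prod_map_mul, Multiset.map_const', Multiset.prod_replicate,
          ← hf.natDegree_eq_card_roots, mul_left_comm]

theorem abs_eval_le_of_laguerre_le (hf : f.Splits) {x M : K} (hM : 0 ≤ M) (hx : f.eval x ≠ 0)
    (h : (laguerre f).eval x ≤ M ^ 2 * f.eval x ^ 2) (y : K) :
    |f.eval y| ≤ (1 + |y - x| * M) ^ f.natDegree * |f.eval x| := by
  refine abs_eval_le_mul_of_splits_of_forall_root hf fun r hr => ?_
  have hsq : 1 * f.eval x ^ 2 ≤ (M * |x - r|) ^ 2 * f.eval x ^ 2 :=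
    calc 1 * f.eval x ^ 2 ≤ (x - r) ^ 2 * (laguerre f).eval x := by
          simpa using sq_eval_le_sq_sub_mul_laguerre_of_isRoot hf hr x
      _ ≤ (x - r) ^ 2 * (M ^ 2 * f.eval x ^ 2) := by gcongr
      _ = (M * |x - r|) ^ 2 * f.eval x ^ 2 := by rw [mul_pow, sq_abs]; ring
  have hroot : 1 ≤ M * |x - r| :=
    (one_le_sq_iff₀ (by positivity)).1 (le_of_mul_le_mul_right hsq (by positivity))
  calc |y - r| ≤ |y - x| * 1 + |x - r| := by simpa using abs_sub_le y x r
    _ ≤ |y - x| * (M * |x - r|) + |x - r| := by gcongr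
    _ = (1 + |y - x| * M) * |x - r| := by ring

end Laguerre

section Calculus

open Filter Topology

theorem frequently_nonneg_mul_of_hasDerivAt {g : ℝ → ℝ} {g' s₀ : ℝ} (hg : HasDerivAt g g' s₀)
    (h0 : g s₀ = 0) (hg' : g' ≠ 0) (γ : ℝ) : ∃ᶠ s in 𝓝[≠] s₀, 0 ≤ γ * g s := by
  intro hneg
  have hmax : IsLocalMax (fun s => γ * g s) s₀ := by
    filter_upwards [eventually_nhdsWithin_iff.1 hneg] with s hs
    rcases eq_or_ne s s₀ with rfl | hne
    · exact le_rfl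
    · simpa [h0] using (not_le.1 (hs hne)).le
  have hγ : γ = 0 := by simpa [hg'] using hmax.hasDerivAt_eq_zero (hg.const_mul γ)
  obtain ⟨s, hs⟩ := hneg.exists
  simp [hγ] at hs

theorem nonpos_of_hasDerivAt_of_eventually_nhdsLT_le {g : ℝ → ℝ} {g' t₀ : ℝ}
    (hg : HasDerivAt g g' t₀) (h : ∀ᶠ t in 𝓝[<] t₀, g t₀ ≤ g t) : g' ≤ 0 := by
  refine le_of_tendsto ((hasDerivWithinAt_iff_tendsto_slope' Set.self_notMem_Iio).1
    (hg.hasDerivWithinAt (s := Set.Iio t₀))) ?_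
  filter_upwards [h, self_mem_nhdsWithin] with t hle hlt
  rw [slope_def_field]
  exact div_nonpos_of_nonneg_of_nonpos (sub_nonneg.2 hle) (sub_nonpos.2 (le_of_lt hlt))

theorem eventually_prod_lt_of_hasDerivAt_neg {E : Type*} [TopologicalSpace E] {g g' : E → ℝ → ℝ}
    {x₀ : E} {t₀ : ℝ} (hg : ∀ x t, HasDerivAt (g x) (g' x t) t)
    (hcont : ContinuousAt (fun z : E × ℝ => g' z.1 z.2) (x₀, t₀)) (hneg : g' x₀ t₀ < 0) :
    ∀ᶠ z in 𝓝 (x₀, t₀), z.2 < t₀ → g z.1 t₀ < g z.1 z.2 := by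
  have hev : ∀ᶠ z : E × ℝ in 𝓝 (x₀, t₀), g' z.1 z.2 < 0 := hcont.eventually_lt_const hneg
  rw [nhds_prod_eq] at hev ⊢
  obtain ⟨U, hU, V, hV, hUV⟩ := eventually_prod_iff.1 hev
  obtain ⟨δ, hδ, hball⟩ := Metric.eventually_nhds_iff_ball.1 hV
  filter_upwards [hU.prod_mk (Metric.ball_mem_nhds t₀ hδ)] with z hz hlt
  refine strictAntiOn_of_hasDerivWithinAt_neg (f' := g' z.1) (convex_Icc z.2 t₀)
    (fun t _ => (hg z.1 t).continuousAt.continuousWithinAt)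
    (fun t _ => (hg z.1 t).hasDerivWithinAt) (fun t ht => hUV hz.1 (hball t ?_))
    (Set.left_mem_Icc.2 hlt.le) (Set.right_mem_Icc.2 hlt.le) hlt
  exact (convex_ball t₀ δ).ordConnected.out hz.2 (Metric.mem_ball_self hδ) (interior_subset ht)

theorem isRoot_of_splits_of_isRoot_derivative {f : ℝ → Polynomial ℝ} {s₀ x y c : ℝ} {N : ℕ}
    (hsplits : ∀ s, (f s).Splits) (hdeg : ∀ s, (f s).natDegree ≤ N)
    (hx : HasDerivAt (fun s => (f s).eval x) c s₀) (hc : c ≠ 0)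
    (hx' : DifferentiableAt ℝ (fun s => (f s).derivative.eval x) s₀)
    (hx'' : DifferentiableAt ℝ (fun s => (f s).derivative.derivative.eval x) s₀)
    (hy : ContinuousAt (fun s => (f s).eval y) s₀)
    (hroot : (f s₀).IsRoot x) (hroot' : (f s₀).derivative.IsRoot x) :
    (f s₀).IsRoot y := by
  set γ := (f s₀).derivative.derivative.eval x
  have hO : (fun s => s - s₀) =O[𝓝 s₀] fun s => (f s).eval x := by
    simpa [Function.comp_def, hroot.eq_zero] using
      (hx.isTheta_sub hc).isBigO_symm.comp_tendsto prod_pure.ge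
  have hO' : (fun s => (f s).derivative.eval x) =O[𝓝 s₀] fun s => (f s).eval x := by
    simpa [hroot'.eq_zero] using hx'.isBigO_sub.trans hO
  have hO'' : (fun s => (f s).derivative.derivative.eval x - γ) =O[𝓝 s₀]
      fun s => (f s).eval x := hx''.isBigO_sub.trans hO
  have hlag : (fun s => (f s).derivative.eval x ^ 2 -
      (f s).eval x * ((f s).derivative.derivative.eval x - γ)) =O[𝓝 s₀]
      fun s => (f s).eval x ^ 2 := by
    simpa only [sq] using (hO'.mul hO').sub ((Asymptotics.isBigO_refl _ _).mul hO'')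
  obtain ⟨C, hC, hbound⟩ := hlag.exists_pos
  have hlim : Tendsto (fun s => (1 + |y - x| * √C) ^ N * |(f s).eval x| - |(f s).eval y|)
      (𝓝[≠] s₀) (𝓝 ((1 + |y - x| * √C) ^ N * |(f s₀).eval x| - |(f s₀).eval y|)) :=
    ((hx.continuousAt.abs.const_mul _).sub hy.abs).tendsto.mono_left nhdsWithin_le_nhds
  have hle := ge_of_tendsto_of_frequently (b := 0) hlim ?_
  · simpa [hroot.eq_zero] using hle
  refine ((frequently_nonneg_mul_of_hasDerivAt hx hroot hc γ).and_eventually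
    ((hx.eventually_ne hc (c := 0)).and (hbound.bound.filter_mono nhdsWithin_le_nhds))).mono ?_
  rintro s ⟨hsign, hne, hs⟩
  have hlag_le : (laguerre (f s)).eval x ≤ √C ^ 2 * (f s).eval x ^ 2 := by
    rw [Real.sq_sqrt hC.le]
    have := (le_abs_self _).trans hs
    rw [Real.norm_of_nonneg (sq_nonneg _)] at this
    simp only [laguerre, Polynomial.eval_sub, Polynomial.eval_mul, Polynomial.eval_pow]
    linarith
  rw [sub_nonneg]
  calc |(f s).eval y|
      ≤ (1 + |y - x| * √C) ^ (f s).natDegree * |(f s).eval x| :=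
        abs_eval_le_of_laguerre_le (hsplits s) (Real.sqrt_nonneg C) hne hlag_le y
    _ ≤ (1 + |y - x| * √C) ^ N * |(f s).eval x| := by
        gcongr
        · exact le_add_of_nonneg_right (by positivity)
        · exact hdeg s

end Calculus

section MvPolynomial

theorem derivation_aeval {R A M σ : Type*} [CommRing R] [CommRing A] [Algebra R A] [AddCommGroup M]
    [Module R M] [Module A M] [Fintype σ] (D : Derivation R A M) (f : σ → A)
    (p : MvPolynomial σ R) : D (aeval f p) = ∑ i, aeval f (pderiv i p) • D (f i) := by
  classical
  induction p using MvPolynomial.induction_on with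
  | C r => simp
  | add p q hp hq => simp [hp, hq, add_smul, Finset.sum_add_distrib]
  | mul_X p j hp =>
    simp [pderiv_X, hp, add_smul, Finset.sum_add_distrib, Finset.smul_sum, Pi.single_apply,
      mul_smul, apply_ite (aeval f)]

@[fun_prop]
theorem differentiable_mvPolynomial_eval {𝕜 E σ : Type*} [NontriviallyNormedField 𝕜]
    [NormedAddCommGroup E] [NormedSpace 𝕜 E] [Finite σ] {f : E → σ → 𝕜}
    (hf : Differentiable 𝕜 f) (p : MvPolynomial σ 𝕜) :
    Differentiable 𝕜 fun x => eval (f x) p := by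
  have := Fintype.ofFinite σ
  induction p using MvPolynomial.induction_on with
  | C r => simp
  | add p q hp hq => simpa only [map_add] using! hp.add hq
  | mul_X p i hp => simpa only [map_mul, eval_X] using! hp.mul (differentiable_pi.1 hf i)

end MvPolynomial

section LinePoly

variable {n : ℕ} (h : MvPolynomial (Fin n) ℝ) (a v : Fin n → ℝ)

theorem eval_dirDeriv : eval a (dirDeriv v h) = ∑ i, v i * eval a (pderiv i h) := by
  simp [dirDeriv]

theorem linePoly_eval (t : ℝ) : (linePoly h a v).eval t = eval (a + t • v) h := by
  have hpoint : (fun i => Polynomial.aeval t (Polynomial.C (a i) + Polynomial.C (v i) *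
      Polynomial.X)) = a + t • v := by
    ext i
    simp [mul_comm t]
  rw [linePoly, ← Polynomial.coe_aeval_eq_eval, comp_aeval_apply, hpoint, aeval_eq_eval]

theorem derivative_linePoly : (linePoly h a v).derivative = linePoly (dirDeriv v h) a v := by
  have hchain := derivation_aeval Polynomial.derivative'
    (fun i => Polynomial.C (a i) + Polynomial.C (v i) * Polynomial.X) h
  rw [Polynomial.derivative'_apply] at hchain
  rw [linePoly, hchain, linePoly, dirDeriv, map_sum]
  refine Finset.sum_congr rfl fun i _ => ?_
  simpa [Polynomial.smul_eq_C_mul] using mul_comm _ (Polynomial.C (v i))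

theorem natDegree_linePoly_le : (linePoly h a v).natDegree ≤ h.totalDegree := by
  refine (aeval_natDegree_le h le_rfl _ fun i => ?_).trans_eq (mul_one _)
  compute_degree

end LinePoly

section RigidSet

open Filter Topology

variable {n : ℕ} {p q : MvPolynomial (Fin n) ℝ} {e a b : Fin n → ℝ}

theorem RealRooted.splits {f : Polynomial ℝ} (hf : RealRooted f) : f.Splits := by
  refine .of_splits_map (algebraMap ℝ ℂ) (IsAlgClosed.splits _) fun z hz => ?_
  have hz0 : Polynomial.aeval z f = 0 := by
    rw [← Polynomial.eval_map_algebraMap]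
    exact Polynomial.isRoot_of_mem_roots hz
  exact ⟨z.re, Complex.ext rfl (hf z hz0).symm⟩

theorem IsRealZero.of_dvd (hp : IsRealZero p e) (hqp : q ∣ p) : IsRealZero q e := by
  obtain ⟨r, rfl⟩ := hqp
  refine ⟨left_ne_zero_of_mul (by simpa using hp.1), fun v z hz => hp.2 v z ?_⟩
  rw [linePoly, map_mul, map_mul, ← linePoly, hz, zero_mul]

theorem IsRealZero.eval_dirDeriv_ne_zero (hq : IsRealZero q e) (ha : eval a q = 0)
    (hsm : (fun j => eval a (pderiv j q)) ≠ 0) : eval a (dirDeriv (a - e) q) ≠ 0 := by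
  intro htan
  obtain ⟨j, hj⟩ := Function.ne_iff.1 hsm
  set w : Fin n → ℝ := Pi.single j 1
  have hw : eval a (dirDeriv w q) ≠ 0 := by simpa [eval_dirDeriv, w, Pi.single_apply] using hj
  have hline (s : ℝ) : e + (1 : ℝ) • (a - e + s • w) = a + s • w := by module
  have hderiv : HasDerivAt (fun s : ℝ => eval (a + s • w) q) (eval a (dirDeriv w q)) 0 := by
    simpa [linePoly_eval, derivative_linePoly] using (linePoly q a w).hasDerivAt 0
  have hzero := isRoot_of_splits_of_isRoot_derivative
    (f := fun s => linePoly q e (a - e + s • w)) (s₀ := 0) (x := 1) (y := 0)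
    (fun s => (hq.2 _).splits) (fun s => natDegree_linePoly_le q e _)
    (by simpa only [linePoly_eval, hline] using hderiv) hw
    (by
      simp only [derivative_linePoly, linePoly_eval, eval_dirDeriv]
      fun_prop)
    (by
      simp only [derivative_linePoly, linePoly_eval, dirDeriv, map_sum, Derivation.map_smul,
        smul_eval]
      fun_prop)
    (by simpa [linePoly_eval] using continuousAt_const)
    (by simpa [linePoly_eval] using ha)
    (by simpa [linePoly_eval, derivative_linePoly] using htan)
  exact hq.1 (by simpa [linePoly_eval] using hzero)

theorem mem_rigidSet_iff :
    b ∈ rigidSet p e ↔ ∀ t : ℝ, 0 ≤ t → t < 1 → eval (e + t • (b - e)) p ≠ 0 := by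
  simp [rigidSet, linePoly_eval]

theorem mem_rigidSet_prod_iff {ι : Type*} {s : Finset ι} {q : ι → MvPolynomial (Fin n) ℝ} :
    b ∈ rigidSet (∏ i ∈ s, q i) e ↔ ∀ i ∈ s, b ∈ rigidSet (q i) e := by
  simp only [mem_rigidSet_iff, map_prod, Finset.prod_ne_zero_iff]
  tauto

theorem continuous_eval_segment (q : MvPolynomial (Fin n) ℝ) (e : Fin n → ℝ) :
    Continuous fun z : (Fin n → ℝ) × ℝ => eval (e + z.2 • (z.1 - e)) q :=
  (continuous_eval q).comp (by fun_prop)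

theorem eval_pos_of_mem_rigidSet (he : 0 < eval e q) (hb : b ∈ rigidSet q e) {t : ℝ}
    (ht0 : 0 ≤ t) (ht1 : t < 1) : 0 < eval (e + t • (b - e)) q := by
  by_contra! hle
  have hcont : Continuous fun t : ℝ => eval (e + t • (b - e)) q := by
    simpa only [linePoly_eval] using (linePoly q e (b - e)).continuous
  obtain ⟨u, ⟨hu0, hut⟩, hu⟩ := intermediate_value_Icc' ht0 hcont.continuousOn
    ⟨hle, by simpa using he.le⟩
  exact mem_rigidSet_iff.1 hb u hu0 (hut.trans_lt ht1) hu

theorem eventually_eval_pos_of_mem_rigidSet (he : 0 < eval e q) (hb : b ∈ rigidSet q e) :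
    ∀ᶠ t in 𝓝[<] (1 : ℝ), 0 < eval (e + t • (b - e)) q := by
  filter_upwards [Ico_mem_nhdsLT zero_lt_one] with t ht
  exact eval_pos_of_mem_rigidSet he hb ht.1 ht.2

theorem eval_nonneg_of_mem_rigidSet (he : 0 < eval e q) (hb : b ∈ rigidSet q e) :
    0 ≤ eval b q := by
  have hcont : Continuous fun t : ℝ => eval (e + t • (b - e)) q := by
    simpa only [linePoly_eval] using (linePoly q e (b - e)).continuous
  simpa using ge_of_tendsto ((hcont.tendsto 1).mono_left nhdsWithin_le_nhds)
    ((eventually_eval_pos_of_mem_rigidSet he hb).mono fun _ => le_of_lt)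

theorem IsRealZero.eval_dirDeriv_neg (hq : IsRealZero q e) (he : 0 < eval e q)
    (ha : a ∈ rigidSet q e) (ha0 : eval a q = 0) (hsm : (fun j => eval a (pderiv j q)) ≠ 0) :
    eval a (dirDeriv (a - e) q) < 0 := by
  refine lt_of_le_of_ne ?_ (hq.eval_dirDeriv_ne_zero ha0 hsm)
  have hderiv := (linePoly q e (a - e)).hasDerivAt 1
  simp only [derivative_linePoly, linePoly_eval, one_smul, add_sub_cancel] at hderiv
  refine nonpos_of_hasDerivAt_of_eventually_nhdsLT_le hderiv ?_
  simpa [ha0] using (eventually_eval_pos_of_mem_rigidSet he ha).mono fun _ => le_of_lt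

theorem eventually_prod_eval_lt_eval_segment (h : eval a (dirDeriv (a - e) q) < 0) :
    ∀ᶠ z in 𝓝 (a, (1 : ℝ)), z.2 < 1 → eval z.1 q < eval (e + z.2 • (z.1 - e)) q := by
  have hcont : Continuous fun z : (Fin n → ℝ) × ℝ =>
      eval (e + z.2 • (z.1 - e)) (dirDeriv (z.1 - e) q) := by
    simp only [eval_dirDeriv]
    exact continuous_finsetSum _ fun j _ =>
      (by fun_prop : Continuous _).mul (continuous_eval_segment (pderiv j q) e)
  have hlt := eventually_prod_lt_of_hasDerivAt_neg (x₀ := a) (t₀ := 1)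
    (g := fun b t => eval (e + t • (b - e)) q)
    (fun b t => by
      simpa only [derivative_linePoly, linePoly_eval] using (linePoly q e (b - e)).hasDerivAt t)
    hcont.continuousAt (by simpa using h)
  simpa using hlt

theorem IsRealZero.eventually_mem_rigidSet_iff (hq : IsRealZero q e) (he : 0 < eval e q)
    (ha : a ∈ rigidSet q e) (hsm : eval a q = 0 → (fun j => eval a (pderiv j q)) ≠ 0) :
    ∀ᶠ b in 𝓝 a, b ∈ rigidSet q e ↔ (eval a q = 0 → 0 ≤ eval b q) := by
  have hpos_nhds {t : ℝ} (ht : 0 < eval (e + t • (a - e)) q) :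
      ∀ᶠ z in 𝓝 (a, t), 0 < eval (e + z.2 • (z.1 - e)) q :=
    (continuous_eval_segment q e).continuousAt.eventually_const_lt ht
  have hlocal : ∀ t ∈ Set.Icc (0 : ℝ) 1, ∀ᶠ z in 𝓝 (a, t),
      (eval a q = 0 → 0 ≤ eval z.1 q) → z.2 < 1 → 0 < eval (e + z.2 • (z.1 - e)) q := by
    rintro t ⟨ht0, ht1⟩
    rcases ht1.lt_or_eq with ht1 | rfl
    · exact (hpos_nhds (eval_pos_of_mem_rigidSet he ha ht0 ht1)).mono fun z hz _ _ => hz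
    rcases (eval_nonneg_of_mem_rigidSet he ha).eq_or_lt' with ha0 | hapos
    · filter_upwards [eventually_prod_eval_lt_eval_segment
        (hq.eval_dirDeriv_neg he ha ha0 (hsm ha0))] with z hz hb hz1
      exact (hb ha0).trans_lt (hz hz1)
    · exact (hpos_nhds (by simpa using hapos)).mono fun z hz _ _ => hz
  filter_upwards [isCompact_Icc.eventually_forall_of_forall_eventually (P := fun b t =>
    (eval a q = 0 → 0 ≤ eval b q) → t < 1 → 0 < eval (e + t • (b - e)) q) hlocal] with b hb
  exact ⟨fun hmem _ => eval_nonneg_of_mem_rigidSet he hmem, fun hnonneg => mem_rigidSet_iff.2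
    fun t ht0 ht1 => (hb t ⟨ht0, ht1.le⟩ hnonneg ht1).ne'⟩

theorem eventually_mem_rigidSet_prod_iff {ι : Type*} [Fintype ι]
    {q : ι → MvPolynomial (Fin n) ℝ} (hrz : IsRealZero (∏ i, q i) e)
    (hpos : ∀ i, 0 < eval e (q i)) (ha : a ∈ rigidSet (∏ i, q i) e)
    (hsm : ∀ i, eval a (q i) = 0 → (fun j => eval a (pderiv j (q i))) ≠ 0) :
    ∀ᶠ b in 𝓝 a, b ∈ rigidSet (∏ i, q i) e ↔ ∀ i, eval a (q i) = 0 → 0 ≤ eval b (q i) := by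
  have hfactor (i : ι) :
      ∀ᶠ b in 𝓝 a, b ∈ rigidSet (q i) e ↔ (eval a (q i) = 0 → 0 ≤ eval b (q i)) :=
    (hrz.of_dvd (Finset.dvd_prod_of_mem q (Finset.mem_univ i))).eventually_mem_rigidSet_iff
      (hpos i) (mem_rigidSet_prod_iff.1 ha i (Finset.mem_univ i)) (hsm i)
  filter_upwards [eventually_all.2 hfactor] with b hb
  simpa [mem_rigidSet_prod_iff] using forall_congr' hb

end RigidSet

theorem dist_le_of_sum_sq_sub_le {ι : Type*} [Fintype ι] {a b : ι → ℝ} {ε : ℝ} (hε : 0 ≤ ε)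
    (h : ∑ i, (b i - a i) ^ 2 ≤ ε ^ 2) : dist b a ≤ ε :=
  (dist_pi_le_iff hε).2 fun i => abs_le_of_sq_le_sq
    ((Finset.single_le_sum (f := fun i => (b i - a i) ^ 2) (fun _ _ => sq_nonneg _)
      (Finset.mem_univ i)).trans h) hε

theorem local_description_of_rigidSet_general {n : ℕ} {ι : Type*} [Fintype ι]
    (q : ι → MvPolynomial (Fin n) ℝ) (e : Fin n → ℝ) (hrz : IsRealZero (∏ i, q i) e)
    (hpos : ∀ i, 0 < eval e (q i)) (a : Fin n → ℝ) (ha : a ∈ rigidSet (∏ i, q i) e)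
    (hsm : ∀ i, eval a (q i) = 0 → (fun j => eval a (pderiv j (q i))) ≠ 0) :
    ∃ ε₀ > (0 : ℝ), ∀ ε : ℝ, 0 < ε → ε ≤ ε₀ →
      {b : Fin n → ℝ | ∑ i, (b i - a i) ^ 2 ≤ ε ^ 2} ∩ rigidSet (∏ i, q i) e
        = {b : Fin n → ℝ | (∑ i, (b i - a i) ^ 2 ≤ ε ^ 2) ∧
            ∀ i, eval a (q i) = 0 → 0 ≤ eval b (q i)} := by
  obtain ⟨ε₀, hε₀, hball⟩ := Metric.nhds_basis_closedBall.eventually_iff.1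
    (eventually_mem_rigidSet_prod_iff hrz hpos ha hsm)
  refine ⟨ε₀, hε₀, fun ε hε hle => Set.ext fun b => and_congr_right fun hb => ?_⟩
  exact hball ((dist_le_of_sum_sq_sub_le hε.le hb).trans hle)

/-- Let `p` be real-zero with respect to `e` with compact rigidly convex
set, let `p = p₁ ⋯ pₘ` be a factorization into irreducible factors (normalized so that
`pᵢ(e) > 0`), and let `a` be a boundary point of `S_e(p)` such that every irreducible
factor vanishing at `a` has `a` as a smooth point. Then for all sufficiently small `ε > 0`
one has `B_ε(a) ∩ S_e(p) = {b : ‖b − a‖² ≤ ε² and pᵢ(b) ≥ 0 for all i with pᵢ(a) = 0}`. -/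
theorem local_description_of_rigidSet
    {n m : ℕ} (p : MvPolynomial (Fin n) ℝ) (e : Fin n → ℝ) (hrz : IsRealZero p e)
    (hcomp : IsCompact (rigidSet p e))
    (q : Fin m → MvPolynomial (Fin n) ℝ) (hirr : ∀ i, Irreducible (q i))
    (hfac : p = ∏ i, q i) (hnorm : ∀ i, 0 < MvPolynomial.eval e (q i))
    (a : Fin n → ℝ) (ha : a ∈ frontier (rigidSet p e))
    (hsm : ∀ i, MvPolynomial.eval a (q i) = 0 →
      (fun j => MvPolynomial.eval a (MvPolynomial.pderiv j (q i))) ≠ 0) :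
    ∃ ε₀ > (0 : ℝ), ∀ ε : ℝ, 0 < ε → ε ≤ ε₀ →
      {b : Fin n → ℝ | ∑ i, (b i - a i) ^ 2 ≤ ε ^ 2} ∩ rigidSet p e
        = {b : Fin n → ℝ | (∑ i, (b i - a i) ^ 2 ≤ ε ^ 2) ∧
            ∀ i, MvPolynomial.eval a (q i) = 0 → 0 ≤ MvPolynomial.eval b (q i)} := by
  subst hfac
  exact local_description_of_rigidSet_general q e hrz hnorm a
    (hcomp.isClosed.frontier_subset ha) hsm
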